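/- arXiv:2309.04432 — 2 statements merged into one kernel-verified Lean document; each statement's English description precedes it below -/
import Mathlib

section
/- Let s, c : ℝ → ℝ be real-valued functions such that s is differentiable with sup_x |s(x)| ≤ 1 and sup_x |s'(x)| < ∞, and c is bounded and measurable. For u ∈ H², the product s·u belongs to H¹, so one may define the densely defined operator L on L²(ℝ, ℂ), with domain H², by L u := D²u + s·(T(s·u)) + c·u, where D² is the Fourier multiplier with symbol ξ² (so D²u = −u'') and T is the Fourier multiplier with symbol 1 + |ξ| applied to functions in H¹. Then L is self-adjoint, i.e. L coincides with its Hilbert-space adjoint as an unbounded operator on L². -/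
/-!
The operator `L` is a relatively bounded symmetric perturbation of `D²`, with relative bound zero, so
its self-adjointness is an instance of the Kato–Rellich theorem. The argument is direct: `L` is
symmetric, and `L + i t` and `L - i t` are onto for `t` large, which suffices
(`isSelfAdjoint_of_symmetric_of_surjective`).

The analytic core is the product rule `F (s' u + s u') = i ξ · F (s u)` for `u ∈ H¹`
(`fourier_product_rule`). The unitary `F` is known only through its action on derivatives of
Schwartz functions, and `s` is merely differentiable with bounded derivative, so the rule goes through
weak derivatives. If `g` is the weak derivative of `u`, then `F g = i ξ · F u`
(`fourier_of_weak_deriv`), because `1 + a d/dx` has dense range on Schwartz functions for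
`a = 1 / (2π)`. Integration by parts then gives the product rule for Schwartz functions, and duality
extends it to `H¹`. In particular `s u ∈ H¹`, with
`‖T (s u)‖ ≤ ‖s u‖ + ‖(s u)'‖ ≤ (1 + sup |s'|) ‖u‖ + ‖u'‖`.

For surjectivity, let `R = (D² + i t)⁻¹` with `|t| = m²`. Both `R` and its derivative have norm at most
`1 / m` (`exists_resolvent`), so `B = (L - D²) R` has norm less than `1` for `m` large. Then `1 + B` is
invertible and `(L + i t) R = 1 + B` is onto. Symmetry holds because `ξ²`, `1 + |ξ|`, `s` and `c`
are real.
-/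

open MeasureTheory Complex Filter

noncomputable section

/-- `L²(ℝ, ℂ)`. -/
abbrev L2 : Type := Lp ℂ 2 (volume : Measure ℝ)

/-- `F` is normalized so that `F(u')(ξ) = i ξ · (F u)(ξ)` for Schwartz functions `u`. -/
def FourierNormalization (F : L2 ≃ₗᵢ[ℂ] L2) : Prop :=
  ∀ (u : SchwartzMap ℝ ℂ) (U V : L2),
    (U : ℝ → ℂ) =ᵐ[volume] (u : ℝ → ℂ) →
    (V : ℝ → ℂ) =ᵐ[volume] (fun x => deriv u x) →
    (F V : ℝ → ℂ) =ᵐ[volume] fun ξ => Complex.I * ξ * (F U : ℝ → ℂ) ξ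

/-- Membership in `H¹`: `∫ (1+ξ²)|û(ξ)|² dξ < ∞`. -/
def InH1 (F : L2 ≃ₗᵢ[ℂ] L2) (u : L2) : Prop :=
  Integrable (fun ξ : ℝ => (1 + ξ ^ 2) * ‖(F u : ℝ → ℂ) ξ‖ ^ 2) volume

/-- Membership in `H²`: `∫ (1+ξ²)²|û(ξ)|² dξ < ∞`. -/
def InH2 (F : L2 ≃ₗᵢ[ℂ] L2) (u : L2) : Prop :=
  Integrable (fun ξ : ℝ => (1 + ξ ^ 2) ^ 2 * ‖(F u : ℝ → ℂ) ξ‖ ^ 2) volume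

open scoped ComplexConjugate SchwartzMap InnerProductSpace

/-! ### A criterion for self-adjointness -/

section Abstract

variable {E : Type*} [NormedAddCommGroup E] [InnerProductSpace ℂ E] [CompleteSpace E]

/-- A symmetric operator `A` such that `A + z` and `A + conj z` are both onto is self-adjoint.
Density of the domain is not assumed: it follows from surjectivity. -/
theorem isSelfAdjoint_of_symmetric_of_surjective (A : E →ₗ.[ℂ] E) (hsym : A.IsFormalAdjoint A)
    (z : ℂ) (h1 : ∀ y, ∃ x : A.domain, A x + z • (x : E) = y)
    (h2 : ∀ y, ∃ x : A.domain, A x + conj z • (x : E) = y) : IsSelfAdjoint A := by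
  have key : ∀ (z : ℂ) (x y : A.domain),
      ⟪A x + z • (x : E), (y : E)⟫_ℂ = ⟪(x : E), A y + conj z • (y : E)⟫_ℂ := by
    intro z x y
    rw [inner_add_left, inner_add_right, inner_smul_left, inner_smul_right, hsym x y]
  have hdense : Dense (A.domain : Set E) := by
    rw [Submodule.dense_iff_topologicalClosure_eq_top, Submodule.topologicalClosure_eq_top_iff,
      Submodule.eq_bot_iff]
    intro y hy
    obtain ⟨x, rfl⟩ := h1 y
    have hx : (x : E) = 0 := by
      rw [← inner_self_eq_zero (𝕜 := ℂ)]
      obtain ⟨x', hx'⟩ := h2 (x : E)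
      conv_lhs => arg 3; rw [← hx']
      rw [← key, ← inner_conj_symm, (Submodule.mem_orthogonal _ _).1 hy _ x'.2, map_zero]
    have hx0 : x = 0 := Subtype.ext hx
    simp [hx0]
  have hle : A ≤ A.adjoint := LinearPMap.IsFormalAdjoint.le_adjoint hdense hsym
  rw [LinearPMap.isSelfAdjoint_def]
  refine (LinearPMap.eq_of_le_of_domain_eq hle (le_antisymm hle.1 ?_)).symm
  intro u hu
  obtain ⟨w, hw⟩ := h1 (A.adjoint ⟨u, hu⟩ + z • u)
  have hF := LinearPMap.adjoint_isFormalAdjoint hdense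
  -- `(A† + z) (u - w) = 0`, so `u - w` is orthogonal to the range of `A + conj z`, that is, to `E`.
  have hzero : u - w = 0 := by
    rw [← inner_self_eq_zero (𝕜 := ℂ)]
    obtain ⟨x, hx⟩ := h2 (u - w)
    conv_lhs => arg 3; rw [← hx]
    rw [inner_sub_left, ← key, hw, inner_add_left, inner_add_right, inner_smul_left,
      inner_smul_right, hF ⟨u, hu⟩ x]
    simp
  rw [sub_eq_zero.1 hzero]
  exact w.2

end Abstract

/-! ### Multiplication operators and Fourier multipliers on `L²` -/

/-- Multiplication by a bounded measurable function, as a bounded operator on `L²`. -/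
theorem exists_mulOp (m : ℝ → ℂ) (hm : Measurable m) (C : ℝ) (hC : ∀ x, ‖m x‖ ≤ C) :
    ∃ M : L2 →L[ℂ] L2, (∀ f : L2, (M f : ℝ → ℂ) =ᵐ[volume] fun x => m x * (f : ℝ → ℂ) x) ∧
      ‖M‖ ≤ C := by
  have hmem : ∀ f : L2, MemLp (fun x => m x * (f : ℝ → ℂ) x) 2 volume := fun f =>
    (Lp.memLp f).of_le_mul (hm.aestronglyMeasurable.mul (Lp.aestronglyMeasurable f))
      (.of_forall fun x => by rw [norm_mul]; gcongr; exact hC x)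
  have hae : ∀ f : L2, ((hmem f).toLp : ℝ → ℂ) =ᵐ[volume] fun x => m x * (f : ℝ → ℂ) x :=
    fun f => (hmem f).coeFn_toLp
  let M₀ : L2 →ₗ[ℂ] L2 :=
    { toFun := fun f => (hmem f).toLp
      map_add' := fun f g => by
        apply Lp.ext
        filter_upwards [hae f, hae g, hae (f + g), Lp.coeFn_add f g,
          Lp.coeFn_add (hmem f).toLp (hmem g).toLp] with x h1 h2 h3 h4 h5
        rw [h3, h5, h4, Pi.add_apply, Pi.add_apply, h1, h2, mul_add]
      map_smul' := fun a f => by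
        apply Lp.ext
        filter_upwards [hae f, hae (a • f), Lp.coeFn_smul a f,
          Lp.coeFn_smul a (hmem f).toLp] with x h1 h3 h4 h5
        simp only [RingHom.id_apply]
        rw [h3, h5, h4, Pi.smul_apply, Pi.smul_apply, h1, smul_eq_mul, smul_eq_mul]
        ring }
  have hb : ∀ f, ‖M₀ f‖ ≤ C * ‖f‖ := fun f => by
    apply Lp.norm_le_mul_norm_of_ae_le_mul
    filter_upwards [hae f] with x h1
    change ‖((hmem f).toLp : ℝ → ℂ) x‖ ≤ _
    rw [h1, norm_mul]
    gcongr
    exact hC x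
  exact ⟨M₀.mkContinuous C hb, hae, M₀.mkContinuous_norm_le ((norm_nonneg _).trans (hC 0)) hb⟩

/-- The Fourier multiplier with a bounded measurable symbol, as a bounded operator on `L²`. -/
theorem exists_fourierMul (F : L2 ≃ₗᵢ[ℂ] L2) (m : ℝ → ℂ) (hm : Measurable m) (C : ℝ)
    (hC : ∀ x, ‖m x‖ ≤ C) :
    ∃ M : L2 →L[ℂ] L2,
      (∀ f : L2, (F (M f) : ℝ → ℂ) =ᵐ[volume] fun ξ => m ξ * (F f : ℝ → ℂ) ξ) ∧ ‖M‖ ≤ C := by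
  obtain ⟨M, hM, hMC⟩ := exists_mulOp m hm C hC
  refine ⟨(F.symm : L2 →L[ℂ] L2) ∘L M ∘L (F : L2 →L[ℂ] L2), fun f => ?_, ?_⟩
  · simpa using hM (F f)
  · refine ContinuousLinearMap.opNorm_le_bound _ ((norm_nonneg _).trans (hC 0)) fun f => ?_
    simpa using (M.le_of_opNorm_le hMC (F f))

/-- Multiplication by `m` and by `conj m` are adjoint to each other; `m` may be unbounded, as long as
the two products that occur are in `L²`. -/
theorem inner_mul_swap (m : ℝ → ℂ) {f g f' g' : L2}
    (hf : (f' : ℝ → ℂ) =ᵐ[volume] fun x => m x * (f : ℝ → ℂ) x)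
    (hg : (g' : ℝ → ℂ) =ᵐ[volume] fun x => conj (m x) * (g : ℝ → ℂ) x) :
    ⟪f', g⟫_ℂ = ⟪f, g'⟫_ℂ := by
  rw [L2.inner_def, L2.inner_def]
  apply integral_congr_ae
  filter_upwards [hf, hg] with x h1 h2
  rw [h1, h2]
  simp only [RCLike.inner_apply, map_mul]
  ring

theorem inner_mul_comm_of_real (m : ℝ → ℝ) {f g f' g' : L2}
    (hf : (f' : ℝ → ℂ) =ᵐ[volume] fun x => (m x : ℂ) * (f : ℝ → ℂ) x)
    (hg : (g' : ℝ → ℂ) =ᵐ[volume] fun x => (m x : ℂ) * (g : ℝ → ℂ) x) :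
    ⟪f', g⟫_ℂ = ⟪f, g'⟫_ℂ :=
  inner_mul_swap _ hf (by simpa using hg)

/-! ### Weak derivatives and the product rule -/

open scoped FourierTransform LineDeriv in
/-- The equation `φ + φ' / (2π) = ψ` is solvable in the Schwartz space. In terms of Mathlib's Fourier
transform, for which `d/dx` has symbol `2πiξ`, the solution is the multiplier with symbol
`(1 + iξ)⁻¹ = (1 - iξ) / (1 + ξ²)`; this is why the factor `1 / (2π)` is used. -/
theorem schwartz_solve (ψ : 𝓢(ℝ, ℂ)) :
    ∃ φ : 𝓢(ℝ, ℂ), φ + ((1 / (2 * Real.pi) : ℝ) : ℂ) • SchwartzMap.derivCLM ℂ ℂ φ = ψ := by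
  have h0 := Function.hasTemperateGrowth_one_add_norm_sq_rpow ℝ (-1)
  let g : ℝ → ℂ := fun x => (1 - Complex.I * x) * (((1 + ‖x‖ ^ 2) ^ (-1 : ℝ) : ℝ) : ℂ)
  have hg : g.HasTemperateGrowth := by
    fun_prop
  have hx : (fun x : ℝ => (x : ℂ)).HasTemperateGrowth := by fun_prop
  refine ⟨SchwartzMap.fourierMultiplierCLM ℂ g ψ, ?_⟩
  have h1 : ∀ f : 𝓢(ℝ, ℂ), SchwartzMap.derivCLM ℂ ℂ f =
      (2 * Real.pi * Complex.I) • SchwartzMap.fourierMultiplierCLM ℂ (fun x : ℝ => (x : ℂ)) f := by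
    intro f
    have := SchwartzMap.lineDeriv_eq_fourierMultiplierCLM (1 : ℝ) f
    rw [← SchwartzMap.fourierMultiplierCLM_ofReal ℂ (by fun_prop)] at this
    simp only [RCLike.inner_apply, conj_trivial, one_mul] at this
    refine Eq.trans ?_ this
    ext x
    simp [SchwartzMap.lineDerivOp_apply_eq_fderiv]
  rw [h1, SchwartzMap.fourierMultiplierCLM_fourierMultiplierCLM_apply hx hg, smul_smul]
  have h2 : ((1 / (2 * Real.pi) : ℝ) : ℂ) * (2 * Real.pi * Complex.I) = Complex.I := by
    have : (Real.pi : ℂ) ≠ 0 := by exact_mod_cast Real.pi_ne_zero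
    push_cast
    field_simp
  rw [h2, SchwartzMap.fourierMultiplierCLM_apply, SchwartzMap.fourierMultiplierCLM_apply,
    ← FourierTransform.fourierInv_smul, ← FourierTransform.fourierInv_add]
  conv_rhs => rw [← FourierTransform.fourierInv_fourier_eq (F := 𝓢(ℝ, ℂ)) ψ]
  congr 1
  ext x
  rw [_root_.add_apply, _root_.smul_apply, SchwartzMap.smulLeftCLM_apply_apply hg,
    SchwartzMap.smulLeftCLM_apply_apply (hx.mul hg)]
  have h3 : (1 + (x : ℂ) ^ 2) ≠ 0 := by
    have : (1 + x ^ 2 : ℝ) ≠ 0 := by positivity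
    exact_mod_cast this
  have h4 : g x = (1 - Complex.I * x) / (1 + (x : ℂ) ^ 2) := by
    simp only [g, Real.rpow_neg_one, Real.norm_eq_abs, sq_abs]
    push_cast
    rfl
  simp only [Pi.mul_apply, smul_eq_mul, h4]
  field_simp
  linear_combination (-(x : ℂ) ^ 2 * (𝓕 ψ) x) * Complex.I_sq

/-- The range of `1 + (2π)⁻¹ d/dx` on Schwartz functions is dense in `L²`; this is the essential
skew-adjointness of `d/dx` on the Schwartz space. -/
theorem eq_zero_of_orthogonal_schwartz (y : L2)
    (h : ∀ φ : 𝓢(ℝ, ℂ), ⟪y, (φ + ((1 / (2 * Real.pi) : ℝ) : ℂ) •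
      SchwartzMap.derivCLM ℂ ℂ φ).toLp 2 volume⟫_ℂ = 0) : y = 0 := by
  refine (SchwartzMap.denseRange_toLpCLM (F := ℂ) (E := ℝ) (p := 2) (μ := volume)
    (by simp)).eq_zero_of_inner_left ℂ ?_
  intro ψ
  obtain ⟨φ, rfl⟩ := schwartz_solve ψ
  exact h φ

/-- If `g` is the weak derivative of `u`, both in `L²`, then `F g = i ξ · F u`. With `a = 1 / (2π)`, both
`u` and the multiplier `(1 - i a ξ)⁻¹` applied to `u - a g` have the same inner product with every
`φ + a φ'`, so they agree. -/
theorem fourier_of_weak_deriv {F : L2 ≃ₗᵢ[ℂ] L2} (hF : FourierNormalization F) {u g : L2}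
    (h : ∀ φ : 𝓢(ℝ, ℂ), ⟪u, (SchwartzMap.derivCLM ℂ ℂ φ).toLp 2 volume⟫_ℂ =
      -⟪g, φ.toLp 2 volume⟫_ℂ) :
    (F g : ℝ → ℂ) =ᵐ[volume] fun ξ => Complex.I * ξ * (F u : ℝ → ℂ) ξ := by
  set a : ℝ := 1 / (2 * Real.pi) with ha
  have hne : ∀ ξ : ℝ, (1 - Complex.I * (a * ξ)) ≠ 0 := fun ξ h => by
    have := congrArg Complex.re h
    simp at this
  have hm : Measurable fun ξ : ℝ => (1 - Complex.I * (a * ξ))⁻¹ := by fun_prop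
  obtain ⟨M, hM, -⟩ := exists_fourierMul F (fun ξ : ℝ => (1 - Complex.I * (a * ξ))⁻¹) hm 1 (by
    intro ξ
    rw [norm_inv]
    apply inv_le_one_of_one_le₀
    refine le_trans ?_ (Complex.abs_re_le_norm _)
    simp)
  have hu : u - M (u - (a : ℂ) • g) = 0 := by
    apply eq_zero_of_orthogonal_schwartz
    intro φ
    rw [← ha]
    set P := φ.toLp 2 (volume : Measure ℝ)
    set P' := (SchwartzMap.derivCLM ℂ ℂ φ).toLp 2 (volume : Measure ℝ)
    have hP : (φ + (a : ℂ) • SchwartzMap.derivCLM ℂ ℂ φ).toLp 2 (volume : Measure ℝ)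
        = P + (a : ℂ) • P' := rfl
    have hFP := hF φ P P' (φ.coeFn_toLp 2 volume)
      ((SchwartzMap.derivCLM ℂ ℂ φ).coeFn_toLp 2 volume)
    have key : ⟪F (M (u - (a : ℂ) • g)), F (P + (a : ℂ) • P')⟫_ℂ =
        ⟪F (u - (a : ℂ) • g), F P⟫_ℂ := by
      apply inner_mul_swap _ (hM _)
      rw [map_add, map_smul]
      filter_upwards [hFP, Lp.coeFn_add (F P) ((a : ℂ) • F P'),
        Lp.coeFn_smul (a : ℂ) (F P')] with ξ h1 h2 h3
      rw [h2, Pi.add_apply, h3, Pi.smul_apply, h1]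
      have h4 : (1 + Complex.I * (a * ξ)) ≠ 0 := fun h => by
        have := congrArg Complex.re h
        simp at this
      have h5 : conj ((1 - Complex.I * (a * ξ))⁻¹) = (1 + Complex.I * (a * ξ))⁻¹ := by
        simp
      rw [h5, smul_eq_mul, eq_inv_mul_iff_mul_eq₀ h4]
      ring
    rw [hP, inner_sub_left, ← F.inner_map_map (M _), key, F.inner_map_map, inner_add_right,
      inner_smul_right, h, inner_sub_left, inner_smul_left, Complex.conj_ofReal]
    ring
  have h2 := hM (u - (a : ℂ) • g)
  rw [← sub_eq_zero.1 hu, map_sub, map_smul] at h2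
  filter_upwards [h2, Lp.coeFn_sub (F u) ((a : ℂ) • F g),
    Lp.coeFn_smul (a : ℂ) (F g)] with ξ h1 h2 h3
  rw [h2, Pi.sub_apply, h3, Pi.smul_apply, eq_inv_mul_iff_mul_eq₀ (hne ξ), smul_eq_mul] at h1
  have ha0 : (a : ℂ) ≠ 0 := by
    have : a ≠ 0 := by positivity
    exact_mod_cast this
  apply mul_left_cancel₀ ha0
  linear_combination h1

/-- The product rule `(s χ)' = s' χ + s χ'` for a Schwartz function `χ`, on the Fourier side: a
classical integration by parts identifies the weak derivative of `s χ`. -/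
theorem fourier_mul_of_schwartz {F : L2 ≃ₗᵢ[ℂ] L2} (hF : FourierNormalization F) {s : ℝ → ℝ}
    (hs : Differentiable ℝ s) {S S' : L2 →L[ℂ] L2}
    (hS : ∀ f : L2, (S f : ℝ → ℂ) =ᵐ[volume] fun x => (s x : ℂ) * (f : ℝ → ℂ) x)
    (hS' : ∀ f : L2, (S' f : ℝ → ℂ) =ᵐ[volume] fun x => ((deriv s x : ℝ) : ℂ) * (f : ℝ → ℂ) x)
    (χ : 𝓢(ℝ, ℂ)) :
    (F (S' (χ.toLp 2 volume) + S ((SchwartzMap.derivCLM ℂ ℂ χ).toLp 2 volume)) : ℝ → ℂ)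
      =ᵐ[volume] fun ξ => Complex.I * ξ * (F (S (χ.toLp 2 volume)) : ℝ → ℂ) ξ := by
  apply fourier_of_weak_deriv hF
  intro φ
  set X := χ.toLp 2 (volume : Measure ℝ) with hX
  set X' := (SchwartzMap.derivCLM ℂ ℂ χ).toLp 2 (volume : Measure ℝ)
  set P := φ.toLp 2 (volume : Measure ℝ)
  set P' := (SchwartzMap.derivCLM ℂ ℂ φ).toLp 2 (volume : Measure ℝ)
  have aX : (X : ℝ → ℂ) =ᵐ[volume] χ := χ.coeFn_toLp 2 volume
  have aX' : (X' : ℝ → ℂ) =ᵐ[volume] fun x => deriv χ x :=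
    (SchwartzMap.derivCLM ℂ ℂ χ).coeFn_toLp 2 volume
  have aP : (P : ℝ → ℂ) =ᵐ[volume] φ := φ.coeFn_toLp 2 volume
  have aP' : (P' : ℝ → ℂ) =ᵐ[volume] fun x => deriv φ x :=
    (SchwartzMap.derivCLM ℂ ℂ φ).coeFn_toLp 2 volume
  let w : ℝ → ℂ := fun x => (s x : ℂ) * conj (χ x)
  let w' : ℝ → ℂ := fun x => ((deriv s x : ℝ) : ℂ) * conj (χ x) + (s x : ℂ) * conj (deriv χ x)
  have hw : ∀ x, HasDerivAt w (w' x) x := fun x =>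
    (hs x).hasDerivAt.ofReal_comp.mul (χ.hasDerivAt x).star
  have e1 : (fun x => ⟪(S X : ℝ → ℂ) x, (P' : ℝ → ℂ) x⟫_ℂ) =ᵐ[volume] w * fun x => deriv φ x := by
    filter_upwards [hS X, aX, aP'] with x h1 h2 h3
    rw [h1, h2, h3]
    simp only [RCLike.inner_apply, map_mul, Complex.conj_ofReal, w, Pi.mul_apply]
    ring
  have e2 : (fun x => ⟪(S' X + S X' : L2) x, (P : ℝ → ℂ) x⟫_ℂ) =ᵐ[volume] w' * φ := by
    filter_upwards [hS X', hS' X, aX, aX', aP, Lp.coeFn_add (S' X) (S X')] with x h1 h2 h3 h4 h5 h6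
    rw [h6, Pi.add_apply, h1, h2, h3, h4, h5]
    simp only [RCLike.inner_apply, map_mul, map_add, Complex.conj_ofReal, w', Pi.mul_apply]
    ring
  have e3 : (fun x => ⟪(S X : ℝ → ℂ) x, (P : ℝ → ℂ) x⟫_ℂ) =ᵐ[volume] w * φ := by
    filter_upwards [hS X, aX, aP] with x h1 h2 h3
    rw [h1, h2, h3]
    simp only [RCLike.inner_apply, map_mul, Complex.conj_ofReal, w, Pi.mul_apply]
    ring
  rw [L2.inner_def, L2.inner_def, integral_congr_ae e1, integral_congr_ae e2]
  exact integral_mul_deriv_eq_deriv_mul_of_integrable (fun x _ => hw x)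
    (fun x _ => φ.hasDerivAt x) ((L2.integrable_inner _ _).congr e1)
    ((L2.integrable_inner _ _).congr e2) ((L2.integrable_inner _ _).congr e3)

/-- The product rule `(s u)' = s' u + s u'` for `u ∈ H¹` with derivative `g`, on the Fourier side. Tested
against a Schwartz function `φ`, it follows from `F (s φ)' = i ξ · F (s φ)`. -/
theorem fourier_product_rule {F : L2 ≃ₗᵢ[ℂ] L2} (hF : FourierNormalization F) {s : ℝ → ℝ}
    (hs : Differentiable ℝ s) {S S' : L2 →L[ℂ] L2}
    (hS : ∀ f : L2, (S f : ℝ → ℂ) =ᵐ[volume] fun x => (s x : ℂ) * (f : ℝ → ℂ) x)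
    (hS' : ∀ f : L2, (S' f : ℝ → ℂ) =ᵐ[volume] fun x => ((deriv s x : ℝ) : ℂ) * (f : ℝ → ℂ) x)
    {u g : L2} (hg : (F g : ℝ → ℂ) =ᵐ[volume] fun ξ => Complex.I * ξ * (F u : ℝ → ℂ) ξ) :
    (F (S' u + S g) : ℝ → ℂ) =ᵐ[volume] fun ξ => Complex.I * ξ * (F (S u) : ℝ → ℂ) ξ := by
  apply fourier_of_weak_deriv hF
  intro φ
  set P := φ.toLp 2 (volume : Measure ℝ)
  set P' := (SchwartzMap.derivCLM ℂ ℂ φ).toLp 2 (volume : Measure ℝ)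
  have h1 : ⟪F g, F (S P)⟫_ℂ = ⟪F u, -F (S' P + S P')⟫_ℂ := by
    apply inner_mul_swap _ hg
    filter_upwards [fourier_mul_of_schwartz hF hs hS hS' φ,
      Lp.coeFn_neg (F (S' P + S P'))] with ξ h2 h3
    rw [h3, Pi.neg_apply, h2]
    simp only [map_mul, Complex.conj_I, Complex.conj_ofReal]
    ring
  rw [← map_neg, F.inner_map_map, F.inner_map_map, inner_neg_right, inner_add_right] at h1
  rw [inner_mul_comm_of_real s (hS u) (hS P'), inner_add_left,
    inner_mul_comm_of_real (deriv s) (hS' u) (hS' P), inner_mul_comm_of_real s (hS g) (hS P), h1]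
  ring

/-! ### Sobolev spaces on the Fourier side -/

theorem exists_fourier_eq_mul (F : L2 ≃ₗᵢ[ℂ] L2) (u : L2) (m : ℝ → ℂ) (hm : Measurable m)
    (h : Integrable (fun ξ : ℝ => ‖m ξ‖ ^ 2 * ‖(F u : ℝ → ℂ) ξ‖ ^ 2) volume) :
    ∃ v : L2, (F v : ℝ → ℂ) =ᵐ[volume] fun ξ => m ξ * (F u : ℝ → ℂ) ξ := by
  have hmem : MemLp (fun ξ => m ξ * (F u : ℝ → ℂ) ξ) 2 volume := by
    refine (memLp_two_iff_integrable_sq_norm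
      (hm.aestronglyMeasurable.mul (Lp.aestronglyMeasurable (F u)))).2 ?_
    simpa only [Pi.mul_apply, norm_mul, mul_pow] using h
  exact ⟨F.symm hmem.toLp, by simpa using hmem.coeFn_toLp⟩

theorem integrable_sq (f : L2) : Integrable (fun ξ : ℝ => ‖(f : ℝ → ℂ) ξ‖ ^ 2) volume :=
  (memLp_two_iff_integrable_sq_norm (Lp.aestronglyMeasurable f)).1 (Lp.memLp f)

theorem InH2.exists_mul {F : L2 ≃ₗᵢ[ℂ] L2} {u : L2} (hu : InH2 F u) (m : ℝ → ℂ)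
    (hm : Measurable m) (hb : ∀ ξ, ‖m ξ‖ ≤ 1 + ξ ^ 2) :
    ∃ v : L2, (F v : ℝ → ℂ) =ᵐ[volume] fun ξ => m ξ * (F u : ℝ → ℂ) ξ := by
  apply exists_fourier_eq_mul F u m hm
  refine Integrable.mono' hu ?_ (.of_forall fun ξ => ?_)
  · exact (hm.norm.pow_const 2).aestronglyMeasurable.mul
      ((Lp.aestronglyMeasurable (F u)).norm.pow 2)
  · rw [Real.norm_of_nonneg (by positivity)]
    gcongr
    exact hb ξ

theorem InH2.exists_deriv {F : L2 ≃ₗᵢ[ℂ] L2} {u : L2} (hu : InH2 F u) :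
    ∃ g : L2, (F g : ℝ → ℂ) =ᵐ[volume] fun ξ => Complex.I * ξ * (F u : ℝ → ℂ) ξ := by
  refine hu.exists_mul (fun ξ => Complex.I * ξ) (by fun_prop) fun ξ => ?_
  rw [norm_mul, Complex.norm_I, one_mul, Complex.norm_real, Real.norm_eq_abs, abs_le]
  constructor <;> nlinarith [sq_nonneg (ξ - 1), sq_nonneg (ξ + 1)]

theorem InH2.exists_second_deriv {F : L2 ≃ₗᵢ[ℂ] L2} {u : L2} (hu : InH2 F u) :
    ∃ v : L2, (F v : ℝ → ℂ) =ᵐ[volume] fun ξ => (ξ : ℂ) ^ 2 * (F u : ℝ → ℂ) ξ := by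
  refine hu.exists_mul (fun ξ => (ξ : ℂ) ^ 2) (by fun_prop) fun ξ => ?_
  rw [norm_pow, Complex.norm_real, Real.norm_eq_abs, sq_abs]
  linarith

theorem inH1_of_deriv {F : L2 ≃ₗᵢ[ℂ] L2} {u g : L2}
    (hg : (F g : ℝ → ℂ) =ᵐ[volume] fun ξ => Complex.I * ξ * (F u : ℝ → ℂ) ξ) : InH1 F u := by
  refine ((integrable_sq (F u)).add (integrable_sq (F g))).congr ?_
  filter_upwards [hg] with ξ h
  simp only [Pi.add_apply]
  rw [h, norm_mul, norm_mul, Complex.norm_I, Complex.norm_real, Real.norm_eq_abs, mul_pow,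
    one_mul, sq_abs]
  ring

theorem inH2_of_mul {F : L2 ≃ₗᵢ[ℂ] L2} {u f : L2} (m : ℝ → ℂ)
    (hb : ∀ ξ : ℝ, (1 + ξ ^ 2) * ‖m ξ‖ ≤ 2)
    (hu : (F u : ℝ → ℂ) =ᵐ[volume] fun ξ => m ξ * (F f : ℝ → ℂ) ξ) : InH2 F u := by
  refine Integrable.mono' ((integrable_sq (F f)).const_mul 4) ?_ ?_
  · have : Measurable fun ξ : ℝ => (1 + ξ ^ 2) ^ 2 := by fun_prop
    exact this.aestronglyMeasurable.mul ((Lp.aestronglyMeasurable (F u)).norm.pow 2)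
  · filter_upwards [hu] with ξ h
    rw [Real.norm_of_nonneg (by positivity), h, norm_mul, mul_pow, ← mul_assoc, ← mul_pow]
    gcongr
    calc _ ≤ (2 : ℝ) ^ 2 := by gcongr; exact hb ξ
      _ = 4 := by norm_num

/-! ### The multiplier `1 + |ξ|` and the resolvent of `D²` -/

/-- Since `|ξ| = (-i sgn ξ) (i ξ)`, the multiplier with symbol `1 + |ξ|` is `v ↦ v + H v'`, where the
contraction `H` has symbol `-i sgn ξ`. -/
theorem exists_hilbert (F : L2 ≃ₗᵢ[ℂ] L2) :
    ∃ H : L2 →L[ℂ] L2, ‖H‖ ≤ 1 ∧ ∀ v e : L2,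
      ((F e : ℝ → ℂ) =ᵐ[volume] fun ξ => Complex.I * ξ * (F v : ℝ → ℂ) ξ) →
      (F (v + H e) : ℝ → ℂ) =ᵐ[volume] fun ξ => ((1 + |ξ| : ℝ) : ℂ) * (F v : ℝ → ℂ) ξ := by
  obtain ⟨H, hH, hH1⟩ := exists_fourierMul F
    (fun ξ => -Complex.I * ((if 0 ≤ ξ then 1 else -1 : ℝ) : ℂ))
    (by
      have : Measurable fun ξ : ℝ => (if 0 ≤ ξ then 1 else -1 : ℝ) :=
        Measurable.ite measurableSet_Ici measurable_const measurable_const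
      fun_prop) 1
    (fun ξ => by split_ifs <;> simp)
  refine ⟨H, hH1, fun v e he => ?_⟩
  rw [map_add]
  filter_upwards [hH e, he, Lp.coeFn_add (F v) (F (H e))] with ξ h1 h2 h3
  rw [h3, Pi.add_apply, h1, h2]
  split_ifs with h
  · rw [abs_of_nonneg h]
    push_cast
    linear_combination (-(ξ : ℂ) * (F v : ℝ → ℂ) ξ) * Complex.I_sq
  · rw [abs_of_neg (not_le.1 h)]
    push_cast
    linear_combination ((ξ : ℂ) * (F v : ℝ → ℂ) ξ) * Complex.I_sq

/-- For `|t| = m²` with `m ≥ 1`, the operator `R = (D² + i t)⁻¹` maps `L²` into `H²`; both `R` and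
`G = (d/dx) R` have norm at most `1 / m`. -/
theorem exists_resolvent (F : L2 ≃ₗᵢ[ℂ] L2) (m t : ℝ) (hm : 1 ≤ m) (ht : |t| = m ^ 2) :
    ∃ R G : L2 →L[ℂ] L2, ‖R‖ ≤ m⁻¹ ∧ ‖G‖ ≤ m⁻¹ ∧ ∀ f : L2, InH2 F (R f) ∧
      ((F (G f) : ℝ → ℂ) =ᵐ[volume] fun ξ => Complex.I * ξ * (F (R f) : ℝ → ℂ) ξ) ∧
      ((F (f - (t * Complex.I) • R f) : ℝ → ℂ) =ᵐ[volume]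
        fun ξ => (ξ : ℂ) ^ 2 * (F (R f) : ℝ → ℂ) ξ) := by
  have hm0 : 0 < m := by linarith
  have hsq : ∀ ξ : ℝ, ‖(ξ : ℂ) ^ 2 + t * Complex.I‖ ^ 2 = ξ ^ 4 + m ^ 4 := fun ξ => by
    have ht2 : t ^ 2 = m ^ 4 := by rw [← sq_abs, ht]; ring
    have : (ξ : ℂ) ^ 2 + t * Complex.I = ((ξ ^ 2 : ℝ) : ℂ) + (t : ℝ) * Complex.I := by
      push_cast; rfl
    rw [this, Complex.sq_norm, Complex.normSq_add_mul_I, ← ht2]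
    ring
  have hm4 : 0 < m ^ 4 := by positivity
  have hpos : ∀ ξ : ℝ, 0 < ‖(ξ : ℂ) ^ 2 + t * Complex.I‖ := fun ξ => by
    refine lt_of_le_of_ne (norm_nonneg _) fun h => ?_
    have := hsq ξ
    rw [← h] at this
    have : 0 ≤ ξ ^ 4 := by positivity
    simp at *
    linarith
  have hne : ∀ ξ : ℝ, (ξ : ℂ) ^ 2 + t * Complex.I ≠ 0 := fun ξ => norm_pos_iff.1 (hpos ξ)
  have hle : ∀ (ξ y : ℝ), y ^ 2 ≤ ξ ^ 4 + m ^ 4 → y ≤ ‖(ξ : ℂ) ^ 2 + t * Complex.I‖ :=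
    fun ξ y h => le_of_abs_le (abs_le_of_sq_le_sq (by rw [hsq]; exact h) (norm_nonneg _))
  have hm2 : 1 ≤ m ^ 2 := one_le_pow₀ hm
  obtain ⟨R, hR, hR1⟩ := exists_fourierMul F (fun ξ => ((ξ : ℂ) ^ 2 + t * Complex.I)⁻¹)
    (by fun_prop) m⁻¹ (fun ξ => by
      rw [norm_inv]
      apply inv_anti₀ hm0
      apply hle
      nlinarith [sq_nonneg (ξ ^ 2)])
  obtain ⟨G, hG, hG1⟩ := exists_fourierMul F
    (fun ξ => Complex.I * ξ * ((ξ : ℂ) ^ 2 + t * Complex.I)⁻¹)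
    (by fun_prop) m⁻¹ (fun ξ => by
      rw [norm_mul, norm_mul, Complex.norm_I, one_mul, norm_inv, Complex.norm_real,
        Real.norm_eq_abs, ← div_eq_mul_inv, div_le_iff₀ (hpos ξ), ← div_eq_inv_mul,
        le_div_iff₀ hm0]
      apply hle
      rw [mul_pow, sq_abs]
      nlinarith [sq_nonneg (ξ ^ 2 - m ^ 2), sq_nonneg (ξ ^ 2), sq_nonneg (m ^ 2)])
  refine ⟨R, G, hR1, hG1, fun f => ⟨?_, ?_, ?_⟩⟩
  · refine inH2_of_mul _ (fun ξ => ?_) (hR f)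
    rw [norm_inv, ← div_eq_mul_inv, div_le_iff₀ (hpos ξ), ← div_le_iff₀' two_pos]
    apply hle
    nlinarith [sq_nonneg (ξ ^ 2 - 1), sq_nonneg (ξ ^ 2), sq_nonneg (m ^ 2)]
  · filter_upwards [hR f, hG f] with ξ h1 h2
    rw [h1, h2]
    ring
  · rw [map_sub, map_smul]
    filter_upwards [hR f, Lp.coeFn_sub (F f) ((t * Complex.I) • F (R f)),
      Lp.coeFn_smul (t * Complex.I) (F (R f))] with ξ h1 h2 h3
    rw [h2, Pi.sub_apply, h3, Pi.smul_apply, h1, smul_eq_mul]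
    have := hne ξ
    field_simp
    ring

/-! ### Self-adjointness of `L` -/

/-- Let `s, c : ℝ → ℝ` with `s` differentiable, `|s| ≤ 1`,
`s'` bounded, and `c` bounded measurable.  For `u ∈ H²` the product `s·u` lies in
`H¹`, and the operator `L : H² ⊂ L² → L²`, `L u = D²u + s·T(s·u) + c·u`
(where `D²` is the Fourier multiplier with symbol `ξ²` and `T` the Fourier
multiplier with symbol `1 + |ξ|`), is self-adjoint. -/
theorem operatorL_selfAdjoint (F : L2 ≃ₗᵢ[ℂ] L2) (hF : FourierNormalization F)
    (s c : ℝ → ℝ)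
    (hs_diff : Differentiable ℝ s) (hs_bd : ∀ x, |s x| ≤ 1)
    (hs'_bd : ∃ C : ℝ, ∀ x, |deriv s x| ≤ C)
    (hc_meas : Measurable c) (hc_bd : ∃ C : ℝ, ∀ x, |c x| ≤ C)
    (L : L2 →ₗ.[ℂ] L2)
    (hdom : ∀ u : L2, u ∈ L.domain ↔ InH2 F u)
    (hact : ∀ (u : L.domain) (su v w : L2),
      ((su : ℝ → ℂ) =ᵐ[volume] fun x => (s x : ℂ) * ((u : L2) : ℝ → ℂ) x) →
      ((F v : ℝ → ℂ) =ᵐ[volume] fun ξ => (ξ : ℂ) ^ 2 * (F (u : L2) : ℝ → ℂ) ξ) →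
      ((F w : ℝ → ℂ) =ᵐ[volume] fun ξ =>
        ((1 + |ξ| : ℝ) : ℂ) * (F su : ℝ → ℂ) ξ) →
      (L u : ℝ → ℂ) =ᵐ[volume] fun x =>
        (v : ℝ → ℂ) x + (s x : ℂ) * (w : ℝ → ℂ) x +
          (c x : ℂ) * ((u : L2) : ℝ → ℂ) x) :
    (∀ (u su : L2), InH2 F u →
      ((su : ℝ → ℂ) =ᵐ[volume] fun x => (s x : ℂ) * (u : ℝ → ℂ) x) →
      InH1 F su) ∧
    IsSelfAdjoint L := by
  obtain ⟨C₁, hC₁⟩ := hs'_bd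
  obtain ⟨C₂, hC₂⟩ := hc_bd
  obtain ⟨S, hS, hS1⟩ := exists_mulOp (fun x => (s x : ℂ))
    (Complex.measurable_ofReal.comp hs_diff.continuous.measurable) 1 (by simpa using hs_bd)
  obtain ⟨S', hS', hSd_le⟩ := exists_mulOp (fun x => ((deriv s x : ℝ) : ℂ))
    (Complex.measurable_ofReal.comp (measurable_deriv s)) C₁ (by simpa using hC₁)
  obtain ⟨Q, hQ, hQ1⟩ := exists_mulOp (fun x => (c x : ℂ))
    (Complex.measurable_ofReal.comp hc_meas) C₂ (by simpa using hC₂)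
  obtain ⟨H, hH1, hH⟩ := exists_hilbert F
  -- `L u` in terms of the derivative `g` and the second derivative `v` of `u`.
  have hL : ∀ (u : L.domain) (g v : L2),
      ((F g : ℝ → ℂ) =ᵐ[volume] fun ξ => Complex.I * ξ * (F (u : L2) : ℝ → ℂ) ξ) →
      ((F v : ℝ → ℂ) =ᵐ[volume] fun ξ => (ξ : ℂ) ^ 2 * (F (u : L2) : ℝ → ℂ) ξ) →
      L u = v + S (S (u : L2) + H (S' (u : L2) + S g)) + Q (u : L2) := by
    intro u g v hg hv
    set w := S (u : L2) + H (S' (u : L2) + S g) with hw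
    apply Lp.ext
    filter_upwards [hact u (S u) v w (hS u) hv
      (hH _ _ (fourier_product_rule hF hs_diff hS hS' hg)), hS w, hQ u,
      Lp.coeFn_add (v + S w) (Q (u : L2)), Lp.coeFn_add v (S w)] with x h1 h2 h3 h4 h5
    rw [h1, h4, Pi.add_apply, h5, Pi.add_apply, h2, h3]
  refine ⟨fun u su hu hsu => ?_, ?_⟩
  · obtain ⟨g, hg⟩ := hu.exists_deriv
    have : su = S u := Lp.ext (hsu.trans (hS u).symm)
    rw [this]
    exact inH1_of_deriv (fourier_product_rule hF hs_diff hS hS' hg)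
  have hformal : L.IsFormalAdjoint L := by
    intro u₁ u₂
    obtain ⟨g₁, hg₁⟩ := ((hdom u₁).1 u₁.2).exists_deriv
    obtain ⟨g₂, hg₂⟩ := ((hdom u₂).1 u₂.2).exists_deriv
    obtain ⟨v₁, hv₁⟩ := ((hdom u₁).1 u₁.2).exists_second_deriv
    obtain ⟨v₂, hv₂⟩ := ((hdom u₂).1 u₂.2).exists_second_deriv
    have hw₁ := hH _ _ (fourier_product_rule hF hs_diff hS hS' hg₁)
    have hw₂ := hH _ _ (fourier_product_rule hF hs_diff hS hS' hg₂)
    rw [hL u₁ g₁ v₁ hg₁ hv₁, hL u₂ g₂ v₂ hg₂ hv₂]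
    set w₁ := S (u₁ : L2) + H (S' (u₁ : L2) + S g₁)
    set w₂ := S (u₂ : L2) + H (S' (u₂ : L2) + S g₂)
    have e1 : ⟪v₁, (u₂ : L2)⟫_ℂ = ⟪(u₁ : L2), v₂⟫_ℂ := by
      rw [← F.inner_map_map, ← F.inner_map_map (u₁ : L2)]
      exact inner_mul_comm_of_real (fun ξ => ξ ^ 2) (by simpa using hv₁) (by simpa using hv₂)
    have e2 : ⟪w₁, S (u₂ : L2)⟫_ℂ = ⟪S (u₁ : L2), w₂⟫_ℂ := by
      rw [← F.inner_map_map, ← F.inner_map_map (S (u₁ : L2))]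
      exact inner_mul_comm_of_real (fun ξ => 1 + |ξ|) hw₁ hw₂
    have e3 : ⟪Q (u₁ : L2), (u₂ : L2)⟫_ℂ = ⟪(u₁ : L2), Q (u₂ : L2)⟫_ℂ :=
      inner_mul_comm_of_real c (hQ _) (hQ _)
    rw [inner_add_left, inner_add_left, inner_add_right, inner_add_right, e1, e3,
      inner_mul_comm_of_real s (hS w₁) (hS _), e2, inner_mul_comm_of_real s (hS _) (hS w₂)]
  have hC₁0 : 0 ≤ C₁ := (abs_nonneg _).trans (hC₁ 0)
  have hC₂0 : 0 ≤ C₂ := (abs_nonneg _).trans (hC₂ 0)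
  -- This makes `‖B‖ ≤ (2 + C₁ + C₂) / m < 1` below.
  set m : ℝ := 3 + C₁ + C₂ with hm
  have hm0 : 0 < m := by positivity
  have hsurj : ∀ t : ℝ, |t| = m ^ 2 → ∀ y, ∃ x : L.domain, L x + (t * Complex.I) • (x : L2) = y := by
    intro t ht y
    obtain ⟨R, G, hR1, hG1, hRG⟩ := exists_resolvent F m t (by linarith) ht
    -- With `B = (L - D²) R`, we have `(L + i t) R = 1 + B`.
    let B : L2 →L[ℂ] L2 := S ∘L (S ∘L R + H ∘L (S' ∘L R + S ∘L G)) + Q ∘L R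
    have hcomp : ∀ (A A' : L2 →L[ℂ] L2) (a b : ℝ), ‖A‖ ≤ a → ‖A'‖ ≤ b → ‖A ∘L A'‖ ≤ a * b :=
      fun A A' a b h h' => (A.opNorm_comp_le A').trans
        (mul_le_mul h h' (norm_nonneg _) ((norm_nonneg _).trans h))
    have hB : ‖B‖ < 1 := by
      have hb : ‖B‖ ≤ 1 * (1 * m⁻¹ + 1 * (C₁ * m⁻¹ + 1 * m⁻¹)) + C₂ * m⁻¹ :=
        norm_add_le_of_le (hcomp _ _ _ _ hS1 (norm_add_le_of_le (hcomp _ _ _ _ hS1 hR1)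
          (hcomp _ _ _ _ hH1 (norm_add_le_of_le (hcomp _ _ _ _ hSd_le hR1)
            (hcomp _ _ _ _ hS1 hG1))))) (hcomp _ _ _ _ hQ1 hR1)
      refine hb.trans_lt ?_
      have : 1 * (1 * m⁻¹ + 1 * (C₁ * m⁻¹ + 1 * m⁻¹)) + C₂ * m⁻¹ = (2 + C₁ + C₂) / m := by
        field_simp
        ring
      rw [this, div_lt_one hm0]
      linarith
    have hunit : IsUnit (1 + B) := by
      simpa using isUnit_one_sub_of_norm_lt_one (x := -B) (by simpa using hB)
    obtain ⟨W, hW⟩ := hunit.exists_right_inv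
    obtain ⟨f, hf⟩ : ∃ f, f + B f = y := ⟨W y, by simpa using congrArg (fun A => A y) hW⟩
    obtain ⟨h1, h2, h3⟩ := hRG f
    refine ⟨⟨R f, (hdom _).2 h1⟩, ?_⟩
    rw [hL ⟨R f, (hdom _).2 h1⟩ _ _ h2 h3, ← hf]
    simp only [B, _root_.add_apply, ContinuousLinearMap.comp_apply]
    abel
  refine isSelfAdjoint_of_symmetric_of_surjective L hformal ((m ^ 2 : ℝ) * Complex.I)
    (hsurj _ (abs_of_nonneg (by positivity))) fun y => ?_
  obtain ⟨x, hx⟩ := hsurj (-m ^ 2) (by rw [abs_neg, abs_of_nonneg (by positivity)]) y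
  refine ⟨x, ?_⟩
  rw [← hx]
  simp

end
end

section
/- Let ν > 0 and let λ ∈ ℂ be such that λ² + νλ does not lie in the real interval (−∞, −1] (i.e., it is not the case that Im(λ²+νλ) = 0 and Re(λ²+νλ) ≤ −1). Then for every f ∈ H¹ and every g ∈ L² there exists a unique pair (u, v) ∈ H² × H¹ satisfying λu − v = f and L∞ u + (λ + ν) v = g; moreover there exists a constant C(λ, ν) > 0 such that ‖u‖_{H¹}² + ‖v‖_{L²}² ≤ C(λ, ν)·(‖f‖_{H¹}² + ‖g‖_{L²}²). -/
/-!
On the Fourier side the system decouples at each frequency. Write `m ξ = 1 + |ξ| + ξ²` and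
`z = λ² + νλ`. Substituting `v = λu − f` into the second equation turns it into
`(m ξ + z) û(ξ) = ĥ(ξ)` with `h = g + (λ + ν) f`. Since `m ≥ 1` and `z ∉ (−∞, −1]`, the function
`s ↦ ‖1 + s z‖` has no zero on the compact interval `[0, 1]`; taking `s = 1 / m ξ` gives
`c · m ξ ≤ ‖m ξ + z‖` for some `c > 0` (`exists_symbol_lower_bound`). Hence `û = ĥ / (m + z)` is the
only possible solution (`SolvesBlockSystem.fourier_eq`), and it is one because the factor `m` gained
by the division controls the `H²` weight (`weight_two_le`). The same pointwise bound, integrated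
with Plancherel, gives the resolvent estimate.
-/


open MeasureTheory Complex Filter

noncomputable section

/-- The squared `H¹` norm: `‖u‖_{H¹}² = ∫ (1+ξ²)|û(ξ)|² dξ`. -/
def H1NormSq (F : L2 ≃ₗᵢ[ℂ] L2) (u : L2) : ℝ :=
  ∫ ξ : ℝ, (1 + ξ ^ 2) * ‖(F u : ℝ → ℂ) ξ‖ ^ 2

/-- `w = L∞ u`, i.e. `ŵ(ξ) = (1 + |ξ| + ξ²) û(ξ)` a.e. -/
def IsLinftyOf (F : L2 ≃ₗᵢ[ℂ] L2) (w u : L2) : Prop :=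
  (F w : ℝ → ℂ) =ᵐ[volume] fun ξ => ((1 + |ξ| + ξ ^ 2 : ℝ) : ℂ) * (F u : ℝ → ℂ) ξ

/-- The pair `(u, v)` solves the block system `λu − v = f`, `L∞u + (λ + ν)v = g`. -/
def SolvesBlockSystem (F : L2 ≃ₗᵢ[ℂ] L2) (l : ℂ) (ν : ℝ)
    (u v f g : L2) : Prop :=
  InH2 F u ∧ InH1 F v ∧ l • u - v = f ∧
    ∃ w : L2, IsLinftyOf F w u ∧ w + (l + (ν : ℂ)) • v = g

/-- The symbol `m ξ + z` of `L∞ + z`. -/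
def shiftedSymbol (z : ℂ) (ξ : ℝ) : ℂ := ((1 + |ξ| + ξ ^ 2 : ℝ) : ℂ) + z

lemma exists_symbol_lower_bound (z : ℂ) (hz : ¬ (z.im = 0 ∧ z.re ≤ -1)) :
    ∃ c : ℝ, 0 < c ∧ ∀ ξ : ℝ, c * (1 + |ξ| + ξ ^ 2) ≤ ‖shiftedSymbol z ξ‖ := by
  have hcont : ContinuousOn (fun s : ℝ => ‖(1 : ℂ) + s * z‖) (Set.Icc 0 1) := by fun_prop
  obtain ⟨s, hs, hmin⟩ := isCompact_Icc.exists_isMinOn (Set.nonempty_Icc.2 zero_le_one) hcont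
  refine ⟨‖(1 : ℂ) + s * z‖, ?_, fun ξ => ?_⟩
  · rw [norm_pos_iff]
    intro h0
    have hre := congrArg Complex.re h0
    have him := congrArg Complex.im h0
    simp at hre him
    rcases him with h | h
    · simp [h] at hre
    · refine hz ⟨h, ?_⟩
      by_contra! hcon
      have h1 : s = 1 := le_antisymm hs.2 (by nlinarith [hs.1])
      rw [h1] at hre
      linarith
  · have hm1 : 1 ≤ 1 + |ξ| + ξ ^ 2 := by nlinarith [abs_nonneg ξ, sq_nonneg ξ]
    unfold shiftedSymbol
    generalize 1 + |ξ| + ξ ^ 2 = m at hm1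
    have hm : 0 < m := by linarith
    have key : ‖(1 : ℂ) + s * z‖ ≤ ‖(1 : ℂ) + (m⁻¹ : ℝ) * z‖ :=
      hmin (⟨by positivity, inv_le_one_of_one_le₀ hm1⟩ : m⁻¹ ∈ Set.Icc (0 : ℝ) 1)
    have hne : (m : ℂ) ≠ 0 := by exact_mod_cast hm.ne'
    have hfac : (m : ℂ) + z = (1 + (m⁻¹ : ℝ) * z) * m := by
      push_cast
      field_simp
    rw [hfac, norm_mul, Complex.norm_real, Real.norm_of_nonneg hm.le]
    gcongr

lemma shiftedSymbol_ne_zero {z : ℂ} {c : ℝ} (hc : 0 < c) {ξ : ℝ}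
    (h : c * (1 + |ξ| + ξ ^ 2) ≤ ‖shiftedSymbol z ξ‖) : shiftedSymbol z ξ ≠ 0 := by
  rw [← norm_pos_iff]
  exact lt_of_lt_of_le (by positivity) h

lemma continuous_shiftedSymbol (z : ℂ) : Continuous (shiftedSymbol z) := by
  unfold shiftedSymbol
  fun_prop

/-- Dividing by the symbol gains the full `H²` weight. -/
lemma weight_two_le {z : ℂ} {c : ℝ} (hc : 0 < c) {ξ : ℝ}
    (h : c * (1 + |ξ| + ξ ^ 2) ≤ ‖shiftedSymbol z ξ‖) (a : ℂ) :
    (1 + ξ ^ 2) ^ 2 * ‖(shiftedSymbol z ξ)⁻¹ * a‖ ^ 2 ≤ (c ^ 2)⁻¹ * ‖a‖ ^ 2 := by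
  have hne := norm_pos_iff.2 (shiftedSymbol_ne_zero hc h)
  have hw : c * (1 + ξ ^ 2) ≤ ‖shiftedSymbol z ξ‖ := by nlinarith [abs_nonneg ξ]
  have hsq : c ^ 2 * (1 + ξ ^ 2) ^ 2 ≤ ‖shiftedSymbol z ξ‖ ^ 2 := by
    rw [← mul_pow]
    gcongr
  rw [norm_mul, norm_inv, mul_pow, ← mul_assoc]
  gcongr
  rw [inv_pow, ← div_eq_mul_inv, div_le_iff₀ (by positivity), ← div_eq_inv_mul,
    le_div_iff₀ (by positivity)]
  linarith

lemma L2_integrable_sq (u : L2) : Integrable (fun ξ : ℝ => ‖(u : ℝ → ℂ) ξ‖ ^ 2) volume :=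
  (memLp_two_iff_integrable_sq_norm (Lp.aestronglyMeasurable u)).1 (Lp.memLp u)

lemma L2_norm_sq (u : L2) : ‖u‖ ^ 2 = ∫ ξ : ℝ, ‖(u : ℝ → ℂ) ξ‖ ^ 2 := by
  have h1 := inner_self_eq_norm_sq_to_K (𝕜 := ℂ) u
  rw [L2.inner_def] at h1
  simp only [inner_self_eq_norm_sq_to_K] at h1
  have h2 : ((∫ ξ : ℝ, ‖(u : ℝ → ℂ) ξ‖ ^ 2 : ℝ) : ℂ) = ((‖u‖ ^ 2 : ℝ) : ℂ) := by
    rw [← integral_complex_ofReal]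
    push_cast
    exact h1
  exact_mod_cast h2.symm

/-- Scalar multiples and differences pass through `F` and the a.e. representatives. -/
lemma fourier_sub_smul (F : L2 ≃ₗᵢ[ℂ] L2) (a b : L2) (k : ℂ) :
    (F (a - k • b) : ℝ → ℂ) =ᵐ[volume] fun ξ => (F a : ℝ → ℂ) ξ - k * (F b : ℝ → ℂ) ξ := by
  rw [map_sub, map_smul]
  filter_upwards [Lp.coeFn_sub (F a) (k • F b), Lp.coeFn_smul k (F b)] with ξ h1 h2
  rw [h1, Pi.sub_apply, h2, Pi.smul_apply, smul_eq_mul]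

lemma norm_add_smul_sq_le {E : Type*} [NormedAddCommGroup E] [NormedSpace ℂ E] (a b : E) (k : ℂ) :
    ‖a + k • b‖ ^ 2 ≤ 2 * ‖a‖ ^ 2 + 2 * ‖k‖ ^ 2 * ‖b‖ ^ 2 := by
  have h := norm_add_le a (k • b)
  rw [norm_smul] at h
  have h2 : ‖a + k • b‖ ^ 2 ≤ (‖a‖ + ‖k‖ * ‖b‖) ^ 2 := by gcongr
  nlinarith [sq_nonneg (‖a‖ - ‖k‖ * ‖b‖)]

lemma InH2.inH1 {F : L2 ≃ₗᵢ[ℂ] L2} {u : L2} (h : InH2 F u) : InH1 F u := by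
  refine Integrable.mono' h ?_ (Eventually.of_forall fun ξ => ?_)
  · have := (Lp.aestronglyMeasurable (F u)).norm.pow 2
    exact (by fun_prop : Continuous fun ξ : ℝ => 1 + ξ ^ 2).aestronglyMeasurable.mul this
  · rw [Real.norm_of_nonneg (by positivity)]
    gcongr
    nlinarith [sq_nonneg ξ, sq_nonneg (ξ ^ 2)]

lemma InH1.smul_sub {F : L2 ≃ₗᵢ[ℂ] L2} {u f : L2} (l : ℂ) (hu : InH1 F u) (hf : InH1 F f) :
    InH1 F (l • u - f) := by
  have hdom := (hu.const_mul (2 * ‖l‖ ^ 2)).add (hf.const_mul 2)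
  refine Integrable.mono' hdom ?_ ?_
  · have := (Lp.aestronglyMeasurable (F (l • u - f))).norm.pow 2
    exact (by fun_prop : Continuous fun ξ : ℝ => 1 + ξ ^ 2).aestronglyMeasurable.mul this
  · have e : l • u - f = -(f - l • u) := by abel
    rw [e, map_neg]
    filter_upwards [fourier_sub_smul F f u l, Lp.coeFn_neg (F (f - l • u))] with ξ h1 h2
    rw [Real.norm_of_nonneg (by positivity), h2, Pi.neg_apply, norm_neg, h1]
    have h3 := norm_add_smul_sq_le ((F f : ℝ → ℂ) ξ) ((F u : ℝ → ℂ) ξ) (-l)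
    rw [smul_eq_mul, neg_mul, ← sub_eq_add_neg, norm_neg] at h3
    have h4 := mul_le_mul_of_nonneg_left h3 (by positivity : 0 ≤ 1 + ξ ^ 2)
    simp only [Pi.add_apply]
    linarith

lemma norm_sq_le_H1NormSq {F : L2 ≃ₗᵢ[ℂ] L2} {u : L2} (h : InH1 F u) :
    ‖u‖ ^ 2 ≤ H1NormSq F u := by
  rw [← F.norm_map u, L2_norm_sq]
  refine integral_mono (L2_integrable_sq _) h fun ξ => ?_
  exact le_mul_of_one_le_left (by positivity) (by nlinarith [sq_nonneg ξ])

/-- The system forces `û = ĥ / (m + z)` with `h = g + (λ + ν) f`. -/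
lemma SolvesBlockSystem.fourier_eq {F : L2 ≃ₗᵢ[ℂ] L2} {l : ℂ} {ν : ℝ} {u v f g : L2}
    (hs : SolvesBlockSystem F l ν u v f g)
    (hD : ∀ ξ, shiftedSymbol (l ^ 2 + (ν : ℂ) * l) ξ ≠ 0) :
    (F u : ℝ → ℂ) =ᵐ[volume] fun ξ => (shiftedSymbol (l ^ 2 + (ν : ℂ) * l) ξ)⁻¹ *
      (F (g + (l + (ν : ℂ)) • f) : ℝ → ℂ) ξ := by
  obtain ⟨-, -, h1, w, hw, h2⟩ := hs
  have hweq : w = (g + (l + (ν : ℂ)) • f) - (l ^ 2 + (ν : ℂ) * l) • u := by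
    rw [← h2, ← h1]
    module
  have hsub := fourier_sub_smul F (g + (l + (ν : ℂ)) • f) u (l ^ 2 + (ν : ℂ) * l)
  rw [← hweq] at hsub
  filter_upwards [hw, hsub] with ξ e1 e2
  rw [eq_inv_mul_iff_mul_eq₀ (hD ξ), shiftedSymbol, add_mul, ← e1, e2]
  ring

lemma SolvesBlockSystem.snd_eq {F : L2 ≃ₗᵢ[ℂ] L2} {l : ℂ} {ν : ℝ} {u v f g : L2}
    (hs : SolvesBlockSystem F l ν u v f g) : v = l • u - f := by
  rw [← hs.2.2.1]
  abel

lemma SolvesBlockSystem.unique {F : L2 ≃ₗᵢ[ℂ] L2} {l : ℂ} {ν : ℝ} {u v u' v' f g : L2}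
    (hD : ∀ ξ, shiftedSymbol (l ^ 2 + (ν : ℂ) * l) ξ ≠ 0)
    (hs : SolvesBlockSystem F l ν u v f g) (hs' : SolvesBlockSystem F l ν u' v' f g) :
    u = u' ∧ v = v' := by
  have hu : u = u' := F.injective (Lp.ext ((hs.fourier_eq hD).trans (hs'.fourier_eq hD).symm))
  exact ⟨hu, by rw [hs.snd_eq, hs'.snd_eq, hu]⟩

lemma exists_solvesBlockSystem (F : L2 ≃ₗᵢ[ℂ] L2) (l : ℂ) (ν : ℝ) {c : ℝ} (hc : 0 < c)
    (hD : ∀ ξ, c * (1 + |ξ| + ξ ^ 2) ≤ ‖shiftedSymbol (l ^ 2 + (ν : ℂ) * l) ξ‖)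
    (f g : L2) (hf : InH1 F f) : ∃ u v : L2, SolvesBlockSystem F l ν u v f g := by
  set z := l ^ 2 + (ν : ℂ) * l with hz
  set h : L2 := g + (l + (ν : ℂ)) • f with hh
  have hne : ∀ ξ, shiftedSymbol z ξ ≠ 0 := fun ξ => shiftedSymbol_ne_zero hc (hD ξ)
  have hmeas : AEStronglyMeasurable
      (fun ξ => (shiftedSymbol z ξ)⁻¹ * (F h : ℝ → ℂ) ξ) volume :=
    ((continuous_shiftedSymbol z).inv₀ hne).aestronglyMeasurable.mul
      (Lp.aestronglyMeasurable (F h))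
  have hmem : MemLp (fun ξ => (shiftedSymbol z ξ)⁻¹ * (F h : ℝ → ℂ) ξ) 2 volume := by
    refine (Lp.memLp (F h)).of_le_mul (c := c⁻¹) hmeas (Eventually.of_forall fun ξ => ?_)
    rw [norm_mul, norm_inv]
    gcongr
    refine le_trans ?_ (hD ξ)
    exact le_mul_of_one_le_right hc.le (by nlinarith [abs_nonneg ξ, sq_nonneg ξ])
  set u : L2 := F.symm hmem.toLp with hu
  have hFu : (F u : ℝ → ℂ) =ᵐ[volume] fun ξ => (shiftedSymbol z ξ)⁻¹ * (F h : ℝ → ℂ) ξ := by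
    rw [hu, F.apply_symm_apply]
    exact hmem.coeFn_toLp
  have hu2 : InH2 F u := by
    refine Integrable.mono' ((L2_integrable_sq (F h)).const_mul (c ^ 2)⁻¹) ?_ ?_
    · have := (Lp.aestronglyMeasurable (F u)).norm.pow 2
      exact (by fun_prop : Continuous fun ξ : ℝ => (1 + ξ ^ 2) ^ 2).aestronglyMeasurable.mul this
    · filter_upwards [hFu] with ξ e
      rw [Real.norm_of_nonneg (by positivity), e]
      exact weight_two_le hc (hD ξ) _
  refine ⟨u, l • u - f, hu2, hu2.inH1.smul_sub l hf, by abel, h - z • u, ?_, ?_⟩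
  · filter_upwards [fourier_sub_smul F h u z, hFu] with ξ e1 e2
    have e3 : shiftedSymbol z ξ * (F u : ℝ → ℂ) ξ = (F h : ℝ → ℂ) ξ := by
      rw [e2, mul_inv_cancel_left₀ (hne ξ)]
    rw [e1, ← e3, shiftedSymbol]
    ring
  · rw [hh, hz]
    module

/-- The elliptic estimate `‖u‖_{H¹}² ≤ c⁻² ‖h‖²` for `û = ĥ / (m + z)`. -/
lemma H1NormSq_le {F : L2 ≃ₗᵢ[ℂ] L2} {z : ℂ} {c : ℝ} (hc : 0 < c)
    (hD : ∀ ξ, c * (1 + |ξ| + ξ ^ 2) ≤ ‖shiftedSymbol z ξ‖) {u h : L2} (hu : InH1 F u)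
    (hFu : (F u : ℝ → ℂ) =ᵐ[volume] fun ξ => (shiftedSymbol z ξ)⁻¹ * (F h : ℝ → ℂ) ξ) :
    H1NormSq F u ≤ (c ^ 2)⁻¹ * ‖h‖ ^ 2 := by
  rw [← F.norm_map h, L2_norm_sq, ← integral_const_mul]
  refine integral_mono_ae hu ((L2_integrable_sq (F h)).const_mul _) ?_
  filter_upwards [hFu] with ξ e
  rw [e]
  refine le_trans ?_ (weight_two_le hc (hD ξ) _)
  gcongr
  nlinarith [sq_nonneg ξ, sq_nonneg (ξ ^ 2)]

/-- Let `ν > 0` and `λ ∈ ℂ` with `λ² + νλ ∉ (−∞, −1]`.  Then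
for every `f ∈ H¹` and `g ∈ L²` there is a unique pair `(u, v) ∈ H² × H¹` with
`λu − v = f` and `L∞u + (λ+ν)v = g`, and there is `C(λ, ν) > 0` with
`‖u‖_{H¹}² + ‖v‖_{L²}² ≤ C(λ, ν)·(‖f‖_{H¹}² + ‖g‖_{L²}²)`. -/
theorem block_operator_resolvent (F : L2 ≃ₗᵢ[ℂ] L2) (hF : FourierNormalization F)
    (ν : ℝ) (hν : 0 < ν) (l : ℂ)
    (hl : ¬ ((l ^ 2 + (ν : ℂ) * l).im = 0 ∧ (l ^ 2 + (ν : ℂ) * l).re ≤ -1)) :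
    ∃ C : ℝ, 0 < C ∧
      ∀ f g : L2, InH1 F f →
        (∃! p : L2 × L2, SolvesBlockSystem F l ν p.1 p.2 f g) ∧
        (∀ u v : L2, SolvesBlockSystem F l ν u v f g →
          H1NormSq F u + ‖v‖ ^ 2 ≤ C * (H1NormSq F f + ‖g‖ ^ 2)) := by
  obtain ⟨c, hc, hD⟩ := exists_symbol_lower_bound _ hl
  have hne : ∀ ξ, shiftedSymbol (l ^ 2 + (ν : ℂ) * l) ξ ≠ 0 :=
    fun ξ => shiftedSymbol_ne_zero hc (hD ξ)
  -- `K` bounds `‖u‖_{H¹}²`; the rest of the constant comes from `v = λu − f`.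
  set K : ℝ := (c ^ 2)⁻¹ * (2 + 2 * ‖l + (ν : ℂ)‖ ^ 2) with hK
  have hK0 : 0 < K := by positivity
  refine ⟨K + (2 + 2 * ‖l‖ ^ 2 * K), by positivity, fun f g hf => ⟨?_, fun u v hs => ?_⟩⟩
  · obtain ⟨u, v, hs⟩ := exists_solvesBlockSystem F l ν hc hD f g hf
    refine ⟨(u, v), hs, fun p hp => ?_⟩
    obtain ⟨h1, h2⟩ := hp.unique hne hs
    exact Prod.ext h1 h2
  · have hu1 : InH1 F u := hs.1.inH1
    have hf1 := norm_sq_le_H1NormSq hf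
    have hu0 := norm_sq_le_H1NormSq hu1
    set N := H1NormSq F f + ‖g‖ ^ 2 with hN
    have hfN : ‖f‖ ^ 2 ≤ N := by nlinarith [sq_nonneg ‖g‖]
    have hgN : ‖g‖ ^ 2 ≤ N := by nlinarith [sq_nonneg ‖f‖]
    have hu : H1NormSq F u ≤ K * N := by
      calc H1NormSq F u ≤ (c ^ 2)⁻¹ * ‖g + (l + (ν : ℂ)) • f‖ ^ 2 :=
            H1NormSq_le hc hD hu1 (hs.fourier_eq hne)
        _ ≤ (c ^ 2)⁻¹ * (2 * ‖g‖ ^ 2 + 2 * ‖l + (ν : ℂ)‖ ^ 2 * ‖f‖ ^ 2) := by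
            gcongr
            exact norm_add_smul_sq_le _ _ _
        _ ≤ (c ^ 2)⁻¹ * (2 * N + 2 * ‖l + (ν : ℂ)‖ ^ 2 * N) := by gcongr
        _ = K * N := by rw [hK]; ring
    have hv : ‖v‖ ^ 2 ≤ 2 * N + 2 * ‖l‖ ^ 2 * (K * N) := by
      have hveq : v = -f + l • u := by rw [hs.snd_eq]; abel
      calc ‖v‖ ^ 2 ≤ 2 * ‖-f‖ ^ 2 + 2 * ‖l‖ ^ 2 * ‖u‖ ^ 2 := by
            rw [hveq]
            exact norm_add_smul_sq_le _ _ _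
        _ ≤ 2 * N + 2 * ‖l‖ ^ 2 * (K * N) := by
            rw [norm_neg]
            gcongr
            exact hu0.trans hu
    linarith

end
end
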